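/- Fix μ ∈ (0, 2], an integer q ≥ 1, J > 0 and β > 0, and define Φ_μ(ν) = (πν / cos(πν/2))² · (πν / sin(πν))^{μ/2 − 1} for ν ∈ (0,1). Then there exists a unique ν ∈ (0,1) satisfying the closure condition μ q (β² J² / 2^q)^{μ/2} = Φ_μ(ν). -/

import Mathlib

open Real

noncomputable def auxF (s x : ℝ) : ℝ := 4 * (((x / Real.cos x) ^ 2) ^ s * (x * Real.tan x) ^ (1 - s))

lemma auxF_eq (s ν : ℝ) (h0 : 0 < ν) (h1 : ν < 1) :
    (π * ν / Real.cos (π * ν / 2)) ^ 2 * (π * ν / Real.sin (π * ν)) ^ (s - 1) =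
      auxF s (π * ν / 2) := by
  have hx0 : 0 < π * ν / 2 := by positivity
  have hx1 : π * ν / 2 < π / 2 := by nlinarith [pi_pos]
  obtain ⟨x, hx⟩ : ∃ x, x = π * ν / 2 := ⟨_, rfl⟩
  have h2 : π * ν = 2 * x := by rw [hx]; ring
  rw [← hx] at hx0 hx1 ⊢
  rw [h2, Real.sin_two_mul]
  have hc : 0 < Real.cos x := Real.cos_pos_of_mem_Ioo ⟨by linarith, hx1⟩
  have hs : 0 < Real.sin x := Real.sin_pos_of_pos_of_lt_pi hx0 (by linarith [pi_pos])
  have hA : 0 < (x / Real.cos x) ^ 2 := by positivity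
  have hB : 0 < 2 * x / (2 * Real.sin x * Real.cos x) := by positivity
  have hD : x * Real.tan x = (x / Real.cos x) ^ 2 / (2 * x / (2 * Real.sin x * Real.cos x)) := by
    rw [Real.tan_eq_sin_div_cos]; field_simp
  unfold auxF
  rw [hD, Real.div_rpow hA.le hB.le, ← mul_div_assoc, ← Real.rpow_add hA]
  have : s - 1 = -(1 - s) := by ring
  rw [this, Real.rpow_neg hB.le]
  have : s + (1 - s) = 1 := by ring
  rw [this, Real.rpow_one]
  ring

lemma auxF_strictMono (s : ℝ) (h0 : 0 < s) (h1 : s ≤ 1) :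
    StrictMonoOn (auxF s) (Set.Ioo 0 (π / 2)) := by
  intro x hx y hy hxy
  have hcy : 0 < Real.cos y := Real.cos_pos_of_mem_Ioo ⟨by linarith [hy.1, pi_pos], hy.2⟩
  have hcxy : Real.cos y < Real.cos x :=
    Real.cos_lt_cos_of_nonneg_of_le_pi_div_two hx.1.le hy.2.le hxy
  have hcx : 0 < Real.cos x := hcy.trans hcxy
  have hx0 := hx.1
  have hy0 := hy.1
  have htx : 0 < Real.tan x := Real.tan_pos_of_pos_of_lt_pi_div_two hx.1 hx.2
  have hty : Real.tan x < Real.tan y :=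
    Real.tan_lt_tan_of_nonneg_of_lt_pi_div_two hx.1.le hy.2 hxy
  have hd : x / Real.cos x < y / Real.cos y := by
    rw [div_lt_div_iff₀ hcx hcy]; nlinarith
  have e1 : ((x / Real.cos x) ^ 2) ^ s < ((y / Real.cos y) ^ 2) ^ s := by
    apply Real.rpow_lt_rpow (by positivity) _ h0
    exact pow_lt_pow_left₀ hd (by positivity) (by norm_num)
  have e2 : (x * Real.tan x) ^ (1 - s) ≤ (y * Real.tan y) ^ (1 - s) := by
    apply Real.rpow_le_rpow (by positivity) _ (by linarith)
    nlinarith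
  have e3 : 0 < (x * Real.tan x) ^ (1 - s) := by positivity
  have e4 : 0 ≤ ((y / Real.cos y) ^ 2) ^ s := by positivity
  unfold auxF
  nlinarith

lemma auxF_exists (s : ℝ) (h0 : 0 < s) (h1 : s ≤ 1) (C : ℝ) (hC : 0 < C) :
    ∃ x ∈ Set.Ioo 0 (π / 2), auxF s x = C := by
  obtain ⟨b, hb⟩ : ∃ b, b = Real.arctan (C + 1) := ⟨_, rfl⟩
  have hb1 : π / 4 ≤ b := by
    rw [hb, ← Real.arctan_one]; exact Real.arctan_strictMono.monotone (by linarith)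
  have hb2 : b < π / 2 := hb ▸ Real.arctan_lt_pi_div_two _
  have ht : Real.tan b = C + 1 := by rw [hb, Real.tan_arctan]
  have hb0 : 0 < b := by linarith [pi_pos]
  have hcos : ∀ x ∈ Set.Icc 0 b, Real.cos x ≠ 0 := fun x hx =>
    (Real.cos_pos_of_mem_Ioo ⟨by linarith [hx.1, pi_pos], by linarith [hx.2]⟩).ne'
  have hcont : ContinuousOn (auxF s) (Set.Icc 0 b) := by
    unfold auxF
    refine continuousOn_const.mul (ContinuousOn.mul ?_ ?_)
    · exact ((continuousOn_id.div Real.continuous_cos.continuousOn hcos).pow 2).rpow_const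
        (fun _ _ => Or.inr h0.le)
    · refine ContinuousOn.rpow_const (continuousOn_id.mul ?_) (fun _ _ => Or.inr (by linarith))
      exact Real.continuousOn_tan.mono hcos
  have hz : auxF s 0 = 0 := by simp [auxF, Real.zero_rpow h0.ne']
  have hcb : 0 < Real.cos b := Real.cos_pos_of_mem_Ioo ⟨by linarith, hb2⟩
  have hbig : C < auxF s b := by
    have hp : 0 < b * Real.tan b := by rw [ht]; positivity
    have hle : b * Real.tan b ≤ (b / Real.cos b) ^ 2 := by
      rw [Real.tan_eq_sin_div_cos, div_pow, ← mul_div_assoc, div_le_div_iff₀ hcb (by positivity)]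
      have h3 : Real.sin b * Real.cos b ≤ b := by
        have := Real.sin_lt hb0
        nlinarith [Real.cos_le_one b]
      have := mul_le_mul_of_nonneg_left h3 (mul_pos hb0 hcb).le
      nlinarith
    have h4 : (b * Real.tan b) ^ s ≤ ((b / Real.cos b) ^ 2) ^ s :=
      Real.rpow_le_rpow hp.le hle h0.le
    have h5 : (b * Real.tan b) ^ s * (b * Real.tan b) ^ (1 - s) = b * Real.tan b := by
      rw [← Real.rpow_add hp]; simp
    have h6 : 0 ≤ (b * Real.tan b) ^ (1 - s) := by positivity
    have h7 := mul_le_mul_of_nonneg_right h4 h6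
    rw [h5, ht] at h7
    unfold auxF
    rw [ht]
    nlinarith [pi_gt_three]
  obtain ⟨x, hx, hxC⟩ := intermediate_value_Icc hb0.le hcont ⟨hz.le.trans hC.le, hbig.le⟩
  refine ⟨x, ⟨lt_of_le_of_ne hx.1 ?_, by linarith [hx.2]⟩, hxC⟩
  rintro rfl
  linarith



/-- Existence and uniqueness of the solution `ν ∈ (0,1)` of the large-`q` closure
condition `μ q (β² J² / 2^q)^{μ/2} = Φ_μ(ν)` of the Lévy SYK model. -/
theorem closure_condition_existsUnique (μ : ℝ) (hμ : μ ∈ Set.Ioc (0 : ℝ) 2)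
    (q : ℕ) (hq : 1 ≤ q) (J β : ℝ) (hJ : 0 < J) (hβ : 0 < β) :
    ∃! ν : ℝ, ν ∈ Set.Ioo (0 : ℝ) 1 ∧
      μ * (q : ℝ) * (β ^ 2 * J ^ 2 / 2 ^ q) ^ (μ / 2) =
        (π * ν / Real.cos (π * ν / 2)) ^ 2 *
          (π * ν / Real.sin (π * ν)) ^ (μ / 2 - 1) := by
  have h0 : 0 < μ / 2 := by linarith [hμ.1]
  have h1 : μ / 2 ≤ 1 := by linarith [hμ.2]
  have hμ0 := hμ.1
  have hq0 : (0 : ℝ) < q := by exact_mod_cast hq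
  have hC : 0 < μ * (q : ℝ) * (β ^ 2 * J ^ 2 / 2 ^ q) ^ (μ / 2) := by positivity
  obtain ⟨x, hx, hxC⟩ := auxF_exists (μ / 2) h0 h1 _ hC
  have hpi := pi_pos
  have hx' : π * (2 * x / π) / 2 = x := by field_simp
  have hν0 : 0 < 2 * x / π := by have := hx.1; positivity
  have hν1 : 2 * x / π < 1 := by rw [div_lt_one hpi]; linarith [hx.2]
  refine ⟨2 * x / π, ⟨⟨hν0, hν1⟩, ?_⟩, ?_⟩
  · rw [auxF_eq _ _ hν0 hν1, hx', hxC]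
  · rintro ν ⟨⟨hn0, hn1⟩, h⟩
    rw [auxF_eq _ _ hn0 hn1, ← hxC] at h
    have := (auxF_strictMono _ h0 h1).injOn hx ⟨by positivity, by nlinarith⟩ h
    rw [this]; field_simp
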